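/- arXiv:1608.02406 — 2 statements merged into one kernel-verified Lean document; each statement's English description precedes it below -/
import Mathlib

section
/- In the manipulation construction, for all γ : X → Bool and δ : Y → Bool, if ψ[γ∪δ] is false then the ballot B_{γ,δ} is rational and Dist(B_{γ,δ}, J⃗) = 7n + 3m + 1 + 3u; consequently (using that this is the minimum of Dist(·, J⃗) over rational ballots) B_{γ,δ} ∈ Kemeny(J⃗). -/
/-!
Constraint-based judgment aggregation: the manipulation construction.
Issues are modelled as an inductive type, ballots as functions `Issue n m → Bool`,
the integrity constraint as a predicate on ballots, and the formula ψ as a Boolean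
function of the assignments to X and Y.
-/

namespace Manip

/-- The issues of the manipulation construction. -/
inductive Issue (n m : ℕ) : Type
  | x : Fin n → Issue n m
  | x' : Fin n → Issue n m
  | z : Fin (n / 3) → Issue n m
  | y : Fin m → Issue n m
  | y' : Fin m → Issue n m
  | t : Fin m → Issue n m
  | w1 : Fin (n + 1) → Issue n m
  | w2 : Fin n → Issue n m
  | w3 : Fin n → Issue n m
  | u : Fin 3 → Fin (10 * n + 10 * m + 10) → Issue n m
  deriving DecidableEq, Fintype

variable {n m : ℕ}

/-- Hamming distance between two ballots: the number of issues on which they differ. -/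
def hamming {I : Type*} [Fintype I] (r r' : I → Bool) : ℕ :=
  (Finset.univ.filter (fun i => r i ≠ r' i)).card

def bigA (r : Issue n m → Bool) : Prop := ∀ i, r (.x i) ≠ r (.x' i)
def bigZ (r : Issue n m → Bool) : Prop := ∀ i, r (.z i) = true
def bigB (r : Issue n m → Bool) : Prop := ∀ j, r (.y j) ≠ r (.y' j)
def bigT (r : Issue n m → Bool) : Prop := ∀ j, r (.t j) = true
def bigW1 (r : Issue n m → Bool) : Prop := ∀ ℓ, r (.w1 ℓ) = true
def bigW2 (r : Issue n m → Bool) : Prop := ∀ ℓ, r (.w2 ℓ) = true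
def bigW3 (r : Issue n m → Bool) : Prop := ∀ ℓ, r (.w3 ℓ) = true

/-- The part Γ₀ of the integrity constraint. -/
def gamma0 (psi : (Fin n → Bool) → (Fin m → Bool) → Bool) (r : Issue n m → Bool) : Prop :=
  (bigA r ∨ bigZ r) ∧ (bigA r → ∀ i, r (.z i) = false) ∧
  Xor' (bigB r) (bigT r) ∧ (bigB r → ∀ j, r (.t j) = false) ∧
  (bigZ r → ∀ i, r (.x i) = false ∧ r (.x' i) = false) ∧
  (bigT r → ∀ j, r (.y j) = false ∧ r (.y' j) = false) ∧
  (bigZ r → bigT r) ∧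
  ((bigZ r ∧ bigT r) → (bigW2 r ∨ bigW3 r)) ∧
  ((¬ bigZ r ∧ bigT r) → bigW1 r) ∧
  ((¬ bigZ r ∧ ¬ bigT r) →
    (psi (fun i => r (.x i)) (fun j => r (.y j)) = false ∧ (bigW2 r ∨ bigW3 r)))

/-- A ballot is rational if it satisfies the integrity constraint
`Γ = Γ₀ ∨ ⋁_{i∈[3]} ⋀_{ℓ∈[u]} u_{i,ℓ}`. -/
def rational (psi : (Fin n → Bool) → (Fin m → Bool) → Bool) (r : Issue n m → Bool) : Prop :=
  gamma0 psi r ∨ ∃ i : Fin 3, ∀ ℓ, r (.u i ℓ) = true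

/-- The first individual ballot J₁: true exactly on the w₁- and u₁-issues. -/
def Jone : Issue n m → Bool := fun i => match i with
  | .w1 _ => true
  | .u k _ => k == 0
  | _ => false

/-- The second individual ballot J₂: true exactly on the w₂- and u₂-issues. -/
def Jtwo : Issue n m → Bool := fun i => match i with
  | .w2 _ => true
  | .u k _ => k == 1
  | _ => false

/-- The third individual ballot J₃: true exactly on the x-, x'-, w₃- and u₃-issues. -/
def Jthree : Issue n m → Bool := fun i => match i with
  | .x _ => true
  | .x' _ => true
  | .w3 _ => true
  | .u k _ => k == 2
  | _ => false

/-- Cumulative Hamming distance of a ballot to a profile of three ballots. -/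
def dist3 (r p1 p2 p3 : Issue n m → Bool) : ℕ :=
  hamming r p1 + hamming r p2 + hamming r p3

/-- Cumulative Hamming distance to the profile J⃗ = (J₁, J₂, J₃). -/
def DistP (r : Issue n m → Bool) : ℕ := dist3 r Jone Jtwo Jthree

/-- Membership in the set of Kemeny outcomes of the profile (p1, p2, p3):
a rational ballot minimizing the cumulative Hamming distance among rational ballots. -/
def kemenyMem (psi : (Fin n → Bool) → (Fin m → Bool) → Bool)
    (p1 p2 p3 r : Issue n m → Bool) : Prop :=
  rational psi r ∧ ∀ r', rational psi r' → dist3 r p1 p2 p3 ≤ dist3 r' p1 p2 p3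


/-- The ballot B_{γ,δ}: x_i ↦ γ(x_i), x'_i ↦ ¬γ(x_i), y_j ↦ δ(y_j), y'_j ↦ ¬δ(y_j),
all w₂-issues true, every other issue false. -/
def Bgd (γ : Fin n → Bool) (δ : Fin m → Bool) : Issue n m → Bool := fun i => match i with
  | .x i' => γ i'
  | .x' i' => !(γ i')
  | .y j => δ j
  | .y' j => !(δ j)
  | .w2 _ => true
  | _ => false

end Manip

/-!
The cumulative distance splits over the issues. If `s` of the three voters accept an issue, then
rejecting it costs `s` and accepting it costs `3 - s`. In the profile at hand `s` is `0` on the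
`z`-, `y`-, `y'`- and `t`-issues and `1` on all others. So the all-false ballot is closest, at
distance `5n + 1 + 3u`, and each accepted issue adds an excess of `3` or `1`.

A rational ballot has excess at least `2n + 3m`. Accepting a whole block of `u`-issues already adds
`u = 10n + 10m + 10`. Otherwise `Γ₀` holds, and it forces an excess of `n` from `A` or from `Z`
(as `3 * (n / 3) = n`), of `3m` from `B` or `T`, and of `n` from one of the `w`-blocks. The ballot
`B_{γ,δ}` has exactly the excess `2n + 3m`.
-/

namespace Manip

section TrueCount

variable {ι : Type*} [Fintype ι] {f g : ι → Bool}

/-- The number of issues of a block accepted by a ballot, the ballot on that block being given as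
`f : ι → Bool`. -/
def trueCount (f : ι → Bool) : ℕ := ∑ i, (f i).toNat

lemma trueCount_eq_card (h : ∀ i, f i = true) : trueCount f = Fintype.card ι := by
  simp [trueCount, h]

lemma trueCount_eq_zero (h : ∀ i, f i = false) : trueCount f = 0 := by
  simp [trueCount, h]

lemma trueCount_add_trueCount_of_ne (h : ∀ i, f i ≠ g i) :
    trueCount f + trueCount g = Fintype.card ι := by
  have toNat_add_toNat (i : ι) : (f i).toNat + (g i).toNat = 1 := by
    rw [Bool.eq_not.mpr (h i)]
    cases g i <;> rfl
  simp [trueCount, ← Finset.sum_add_distrib, toNat_add_toNat]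

lemma hamming_eq_trueCount (r r' : ι → Bool) : hamming r r' = trueCount fun i => r i ^^ r' i := by
  rw [hamming, Finset.card_filter, trueCount]
  refine Finset.sum_congr rfl fun i _ => ?_
  cases r i <;> cases r' i <;> rfl

end TrueCount

section Excess

variable {I : Type*}

/-- The number of voters of the profile `(p1, p2, p3)` who accept the issue `i`. -/
def supportCount (p1 p2 p3 : I → Bool) (i : I) : ℕ :=
  (p1 i).toNat + (p2 i).toNat + (p3 i).toNat

/-- What the issues accepted by `r` add to the distance of the all-false ballot from the profile
`(p1, p2, p3)`. This reading presupposes that every issue is accepted by at most one voter, so that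
the subtraction does not truncate. -/
def excess [Fintype I] (p1 p2 p3 r : I → Bool) : ℕ :=
  ∑ i, (3 - 2 * supportCount p1 p2 p3 i) * (r i).toNat

lemma sum_hamming_eq_sum_supportCount_add_excess [Fintype I] {p1 p2 p3 : I → Bool}
    (h : ∀ i, supportCount p1 p2 p3 i ≤ 1) (r : I → Bool) :
    hamming r p1 + hamming r p2 + hamming r p3 =
      ∑ i, supportCount p1 p2 p3 i + excess p1 p2 p3 r := by
  have cost_eq (a b c v : Bool) (habc : a.toNat + b.toNat + c.toNat ≤ 1) :
      (v ^^ a).toNat + (v ^^ b).toNat + (v ^^ c).toNat =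
        a.toNat + b.toNat + c.toNat + (3 - 2 * (a.toNat + b.toNat + c.toNat)) * v.toNat := by
    decide +revert
  simp only [hamming_eq_trueCount, trueCount, excess, ← Finset.sum_add_distrib]
  exact Finset.sum_congr rfl fun i _ => cost_eq _ _ _ _ (h i)

end Excess

variable {n m : ℕ}

section Distance

lemma supportCount_J (i : Issue n m) :
    supportCount Jone Jtwo Jthree i =
      match i with
      | .z _ | .y _ | .y' _ | .t _ => 0
      | _ => 1 := by
  rcases i with _ | _ | _ | _ | _ | _ | _ | _ | _ | ⟨k, _⟩
  case u => fin_cases k <;> rfl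
  all_goals rfl

lemma supportCount_J_le_one (i : Issue n m) : supportCount Jone Jtwo Jthree i ≤ 1 := by
  cases i <;> simp [supportCount_J]

lemma sum_issue {M : Type*} [AddCommMonoid M] (f : Issue n m → M) :
    ∑ i, f i = ∑ i, f (.x i) + (∑ i, f (.x' i) + (∑ i, f (.z i) + (∑ j, f (.y j) +
      (∑ j, f (.y' j) + (∑ j, f (.t j) + (∑ l, f (.w1 l) + (∑ l, f (.w2 l) + (∑ l, f (.w3 l) +
        ∑ k, ∑ l, f (.u k l))))))))) := by
  -- `deriving Fintype` has set up this equivalence with the sum of the ten index types.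
  rw [← (Issue.proxyTypeEquiv n m).sum_comp f]
  simp only [Fintype.sum_sum_type, Fintype.sum_sigma]
  rfl

lemma sum_supportCount_J :
    ∑ i : Issue n m, supportCount Jone Jtwo Jthree i =
      5 * n + 1 + 3 * (10 * n + 10 * m + 10) := by
  simp only [sum_issue, supportCount_J, Finset.sum_const, Finset.card_univ, Fintype.card_fin,
    smul_eq_mul, mul_zero, mul_one]
  ring

lemma distP_eq_add_excess (r : Issue n m → Bool) :
    DistP r = 5 * n + 1 + 3 * (10 * n + 10 * m + 10) + excess Jone Jtwo Jthree r := by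
  rw [DistP, dist3, sum_hamming_eq_sum_supportCount_add_excess supportCount_J_le_one,
    sum_supportCount_J]

lemma excess_J_eq_trueCount (r : Issue n m → Bool) :
    excess Jone Jtwo Jthree r =
      (trueCount (r ∘ .x) + trueCount (r ∘ .x') + 3 * trueCount (r ∘ .z)) +
      3 * (trueCount (r ∘ .y) + trueCount (r ∘ .y') + trueCount (r ∘ .t)) +
      (trueCount (r ∘ .w1) + trueCount (r ∘ .w2) + trueCount (r ∘ .w3)) +
      ∑ k, trueCount (r ∘ .u k) := by
  simp only [excess, sum_issue, supportCount_J, trueCount, Function.comp_apply, mul_zero, mul_one,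
    Nat.sub_zero, Nat.reduceSub, one_mul, ← Finset.mul_sum]
  ring

end Distance

section LowerBound

variable {psi : (Fin n → Bool) → (Fin m → Bool) → Bool} {r : Issue n m → Bool}

lemma le_trueCount_of_bigA_or_bigZ (hdvd : 3 ∣ n) (h : bigA r ∨ bigZ r) :
    n ≤ trueCount (r ∘ .x) + trueCount (r ∘ .x') + 3 * trueCount (r ∘ .z) := by
  rcases h with hA | hZ
  · have hx : trueCount (r ∘ .x) + trueCount (r ∘ .x') = n :=
      (trueCount_add_trueCount_of_ne hA).trans (Fintype.card_fin _)
    lia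
  · have hz : trueCount (r ∘ .z) = n / 3 := (trueCount_eq_card hZ).trans (Fintype.card_fin _)
    lia

lemma le_trueCount_of_bigB_or_bigT (h : bigB r ∨ bigT r) :
    m ≤ trueCount (r ∘ .y) + trueCount (r ∘ .y') + trueCount (r ∘ .t) := by
  rcases h with hB | hT
  · have hy : trueCount (r ∘ .y) + trueCount (r ∘ .y') = m :=
      (trueCount_add_trueCount_of_ne hB).trans (Fintype.card_fin _)
    lia
  · have ht : trueCount (r ∘ .t) = m := (trueCount_eq_card hT).trans (Fintype.card_fin _)
    lia

lemma le_trueCount_of_bigW (h : bigW1 r ∨ bigW2 r ∨ bigW3 r) :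
    n ≤ trueCount (r ∘ .w1) + trueCount (r ∘ .w2) + trueCount (r ∘ .w3) := by
  rcases h with h1 | h2 | h3
  · have hw : trueCount (r ∘ .w1) = n + 1 := (trueCount_eq_card h1).trans (Fintype.card_fin _)
    lia
  · have hw : trueCount (r ∘ .w2) = n := (trueCount_eq_card h2).trans (Fintype.card_fin _)
    lia
  · have hw : trueCount (r ∘ .w3) = n := (trueCount_eq_card h3).trans (Fintype.card_fin _)
    lia

lemma le_sum_trueCount_u {k : Fin 3} (h : ∀ ℓ, r (.u k ℓ) = true) :
    10 * n + 10 * m + 10 ≤ ∑ k, trueCount (r ∘ .u k) :=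
  calc 10 * n + 10 * m + 10 = trueCount (r ∘ .u k) :=
        ((trueCount_eq_card h).trans (Fintype.card_fin _)).symm
    _ ≤ ∑ k, trueCount (r ∘ .u k) :=
      Finset.single_le_sum_of_canonicallyOrdered (f := fun k => trueCount (r ∘ .u k))
        (Finset.mem_univ k)

lemma gamma0.bigW1_or_bigW2_or_bigW3 (h : gamma0 psi r) : bigW1 r ∨ bigW2 r ∨ bigW3 r := by
  obtain ⟨-, -, -, -, -, -, hZT, hw_ZT, hw_T, hw_none⟩ := h
  by_cases hT : bigT r
  · by_cases hZ : bigZ r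
    · exact .inr (hw_ZT ⟨hZ, hT⟩)
    · exact .inl (hw_T ⟨hZ, hT⟩)
  · exact .inr (hw_none ⟨mt hZT hT, hT⟩).2

lemma rational.le_excess (hr : rational psi r) (hdvd : 3 ∣ n) :
    2 * n + 3 * m ≤ excess Jone Jtwo Jthree r := by
  rw [excess_J_eq_trueCount]
  rcases hr with hΓ | ⟨k, hu⟩
  · have hxz := le_trueCount_of_bigA_or_bigZ hdvd hΓ.1
    have hyt := le_trueCount_of_bigB_or_bigT (Xor.or hΓ.2.2.1)
    have hw := le_trueCount_of_bigW hΓ.bigW1_or_bigW2_or_bigW3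
    lia
  · have hu := le_sum_trueCount_u hu
    lia

lemma rational.le_distP (hr : rational psi r) (hdvd : 3 ∣ n) :
    7 * n + 3 * m + 1 + 3 * (10 * n + 10 * m + 10) ≤ DistP r := by
  have hexcess := hr.le_excess hdvd
  rw [distP_eq_add_excess]
  lia

end LowerBound

section Bgd

variable (γ : Fin n → Bool) (δ : Fin m → Bool)

lemma bigA_Bgd : bigA (Bgd γ δ) := fun i => by simp [Bgd]

lemma bigB_Bgd : bigB (Bgd γ δ) := fun j => by simp [Bgd]

lemma bigW2_Bgd : bigW2 (Bgd γ δ) := fun _ => rfl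

lemma not_bigZ_Bgd (hn : 3 ≤ n) : ¬ bigZ (Bgd γ δ) := fun h =>
  Bool.false_ne_true (h ⟨0, Nat.div_pos hn three_pos⟩)

lemma not_bigT_Bgd (hm : 0 < m) : ¬ bigT (Bgd γ δ) := fun h =>
  Bool.false_ne_true (h ⟨0, hm⟩)

variable {γ δ} in
lemma gamma0_Bgd (hn : 3 ≤ n) (hm : 0 < m) {psi : (Fin n → Bool) → (Fin m → Bool) → Bool}
    (hfalse : psi γ δ = false) : gamma0 psi (Bgd γ δ) := by
  have hA := bigA_Bgd γ δ
  have hB := bigB_Bgd γ δ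
  have hZ := not_bigZ_Bgd γ δ hn
  have hT := not_bigT_Bgd γ δ hm
  exact ⟨.inl hA, fun _ _ => rfl, .inl ⟨hB, hT⟩, fun _ _ => rfl, fun h => absurd h hZ,
    fun h => absurd h hT, fun h => absurd h hZ, fun h => absurd h.1 hZ, fun h => absurd h.2 hT,
    fun _ => ⟨hfalse, .inl (bigW2_Bgd γ δ)⟩⟩

lemma excess_Bgd : excess Jone Jtwo Jthree (Bgd γ δ) = 2 * n + 3 * m := by
  have hx : trueCount (Bgd γ δ ∘ .x) + trueCount (Bgd γ δ ∘ .x') = n :=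
    (trueCount_add_trueCount_of_ne (bigA_Bgd γ δ)).trans (Fintype.card_fin _)
  have hy : trueCount (Bgd γ δ ∘ .y) + trueCount (Bgd γ δ ∘ .y') = m :=
    (trueCount_add_trueCount_of_ne (bigB_Bgd γ δ)).trans (Fintype.card_fin _)
  have hw : trueCount (Bgd γ δ ∘ .w2) = n :=
    (trueCount_eq_card (bigW2_Bgd γ δ)).trans (Fintype.card_fin _)
  have hz : trueCount (Bgd γ δ ∘ .z) = 0 := trueCount_eq_zero fun _ => rfl
  have ht : trueCount (Bgd γ δ ∘ .t) = 0 := trueCount_eq_zero fun _ => rfl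
  have hw1 : trueCount (Bgd γ δ ∘ .w1) = 0 := trueCount_eq_zero fun _ => rfl
  have hw3 : trueCount (Bgd γ δ ∘ .w3) = 0 := trueCount_eq_zero fun _ => rfl
  have hu (k : Fin 3) : trueCount (Bgd γ δ ∘ .u k) = 0 := trueCount_eq_zero fun _ => rfl
  rw [excess_J_eq_trueCount, hx, hy, hw, hz, ht, hw1, hw3, Finset.sum_eq_zero fun k _ => hu k]
  ring

lemma distP_Bgd : DistP (Bgd γ δ) = 7 * n + 3 * m + 1 + 3 * (10 * n + 10 * m + 10) := by
  rw [distP_eq_add_excess, excess_Bgd]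
  ring

end Bgd

end Manip

open Manip in
/-- for all γ, δ, if ψ[γ∪δ] is false then B_{γ,δ} is rational,
Dist(B_{γ,δ}, J⃗) = 7n + 3m + 1 + 3u, and consequently B_{γ,δ} ∈ Kemeny(J⃗). -/
theorem manip_counterexample_ballot (n m : ℕ) (hn : 0 < n) (hdvd : 3 ∣ n) (hm : 0 < m)
    (psi : (Fin n → Bool) → (Fin m → Bool) → Bool)
    (γ : Fin n → Bool) (δ : Fin m → Bool)
    (hfalse : psi γ δ = false) :
    rational psi (Bgd γ δ : Issue n m → Bool) ∧
    DistP (Bgd γ δ : Issue n m → Bool) = 7 * n + 3 * m + 1 + 3 * (10 * n + 10 * m + 10) ∧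
    kemenyMem psi Jone Jtwo Jthree (Bgd γ δ : Issue n m → Bool) := by
  have hrational : rational psi (Bgd γ δ) := .inl (gamma0_Bgd (Nat.le_of_dvd hn hdvd) hm hfalse)
  refine ⟨hrational, distP_Bgd γ δ, hrational, fun r' hr' => ?_⟩
  calc DistP (Bgd γ δ) = 7 * n + 3 * m + 1 + 3 * (10 * n + 10 * m + 10) := distP_Bgd γ δ
    _ ≤ DistP r' := hr'.le_distP hdvd
end

section
/- In the bribery construction, assume m < n. If α : X → Bool is such that ψ[α∪β] is true for every β : Y → Bool, then Kemeny((J*_α, J₂, J₃)) = {J*_α}; moreover d(J*_α, J₀, w) = 0, which is strictly smaller than the weighted distance 2m+4 of every Kemeny outcome of the original profile J⃗ to J₀. -/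
/-!
Constraint-based judgment aggregation: the bribery construction.
Issues are modelled as an inductive type, ballots as functions `Issue n m → Bool`,
the integrity constraint as a predicate on ballots, and the formula ψ as a Boolean
function of the assignments to X and Y.
-/

namespace Brib

/-- The issues of the bribery construction. -/
inductive Issue (n m : ℕ) : Type
  | x : Fin n → Issue n m
  | x' : Fin n → Issue n m
  | z : Fin n → Issue n m
  | y : Fin m → Issue n m
  | y' : Fin m → Issue n m
  | t : Fin m → Issue n m
  | u : Fin 3 → Fin (10 * n + 10 * m + 10) → Issue n m
  | a : Issue n m
  | b : Fin (2 * m + 4) → Issue n m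
  deriving DecidableEq, Fintype

variable {n m : ℕ}

/-- Hamming distance between two ballots: the number of issues on which they differ. -/
def hamming {I : Type*} [Fintype I] (r r' : I → Bool) : ℕ :=
  (Finset.univ.filter (fun i => r i ≠ r' i)).card

/-- Weighted Hamming distance: the sum of the weights of the issues on which the
two ballots differ. -/
def whamming {I : Type*} [Fintype I] (w : I → ℕ) (r r' : I → Bool) : ℕ :=
  ∑ i ∈ Finset.univ.filter (fun i => r i ≠ r' i), w i

def bigA (r : Issue n m → Bool) : Prop := ∀ i, r (.x i) ≠ r (.x' i)
def bigZ (r : Issue n m → Bool) : Prop := ∀ i, r (.z i) = true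
def bigB (r : Issue n m → Bool) : Prop := ∀ j, r (.y j) ≠ r (.y' j)
def bigT (r : Issue n m → Bool) : Prop := ∀ j, r (.t j) = true
def bigC (r : Issue n m → Bool) : Prop := ∀ j, r (.b j) = true

/-- The part Γ₀ of the integrity constraint. -/
def gamma0 (psi : (Fin n → Bool) → (Fin m → Bool) → Bool) (r : Issue n m → Bool) : Prop :=
  (r .a = true ∨ bigC r) ∧ (r .a = true → ∀ j, r (.b j) = false) ∧
  (bigC r → r .a = false) ∧
  (bigA r ∨ bigZ r) ∧ (bigA r → ∀ i, r (.z i) = false) ∧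
  Xor' (bigB r) (bigT r) ∧ (bigB r → ∀ j, r (.t j) = false) ∧
  (bigZ r → ∀ i, r (.x i) = false ∧ r (.x' i) = false) ∧
  (bigT r → ∀ j, r (.y j) = false ∧ r (.y' j) = false) ∧
  (bigZ r → (r .a = true ∧ bigT r)) ∧
  ((bigA r ∧ bigB r) →
    (psi (fun i => r (.x i)) (fun j => r (.y j)) = false ∧ r .a = true)) ∧
  ((bigA r ∧ bigT r) → bigC r)

/-- A ballot is rational if it satisfies the integrity constraint
`Γ = Γ₀ ∨ ⋁_{i∈[3]} ⋀_{ℓ∈[u]} u_{i,ℓ}`. -/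
def rational (psi : (Fin n → Bool) → (Fin m → Bool) → Bool) (r : Issue n m → Bool) : Prop :=
  gamma0 psi r ∨ ∃ i : Fin 3, ∀ ℓ, r (.u i ℓ) = true

/-- The profile J⃗ = (J₁, J₂, J₃): the ballot J_{k+1} sets exactly the issues
u_{k+1,ℓ} to true. -/
def Jp (k : Fin 3) : Issue n m → Bool := fun i => match i with
  | .u k' _ => k' == k
  | _ => false

/-- The briber's desired ballot J₀: true exactly on the b- and u₁-issues. -/
def Jzero : Issue n m → Bool := fun i => match i with
  | .b _ => true
  | .u k _ => k == 0
  | _ => false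

/-- The briber's weight function: weight 1 on each b-issue, weight 0 elsewhere. -/
def wt : Issue n m → ℕ := fun i => match i with
  | .b _ => 1
  | _ => 0

/-- Cumulative Hamming distance of a ballot to a profile of three ballots. -/
def dist3 (r p1 p2 p3 : Issue n m → Bool) : ℕ :=
  hamming r p1 + hamming r p2 + hamming r p3

/-- Membership in the set of Kemeny outcomes of the profile (p1, p2, p3):
a rational ballot minimizing the cumulative Hamming distance among rational ballots. -/
def kemenyMem (psi : (Fin n → Bool) → (Fin m → Bool) → Bool)
    (p1 p2 p3 r : Issue n m → Bool) : Prop :=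
  rational psi r ∧ ∀ r', rational psi r' → dist3 r p1 p2 p3 ≤ dist3 r' p1 p2 p3

/-- The ballot J*_α: x_i ↦ α(x_i), x'_i ↦ ¬α(x_i), all t- and b-issues true,
every other issue false. -/
def Jalpha (α : Fin n → Bool) : Issue n m → Bool := fun i => match i with
  | .x i' => α i'
  | .x' i' => !(α i')
  | .t _ => true
  | .b _ => true
  | _ => false

end Brib

/-!
Accepting an issue instead of rejecting it changes the cumulative distance to a profile by the
margin of the issue, the number of rejecting ballots minus the number of accepting ones. In both
profiles every margin is positive, so a ballot is strictly cheaper than any ballot accepting more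
issues. Every rational ballot accepts at least the issues accepted by a ballot of one of four kinds,
and these compete: the one accepting `a` and all `z`- and `t`-issues; those encoding assignments
with `ψ` false and accepting `a`; the `J*_α'`; and the full rows of `u`-issues.

Before the bribe, their costs above the all-rejecting ballot are `3n + 3m + 3`, `3n + 3m + 3`,
`3n + 9m + 12` and `10n + 10m + 10`. So the Kemeny outcomes are of the first two kinds, and they
reject all `b`-issues. After the bribe, the first costs `3n + m + 3`, the second and the third
cost `n + 3m + 3` and `n + 3m + 4` plus twice the number of disagreements between `α'` and `α`, and
the last at least `10n + 10m + 10`. As `ψ[α∪β]` is never false, the second kind has a disagreement;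
and `m < n` makes the first kind too expensive. This leaves `J*_α`.
-/

namespace Brib

/-! ### Margins -/

section Margin

variable {I K : Type*} [Fintype I] [Fintype K]

/-- The number of ballots of the profile `p` rejecting the issue `i`, minus the number of those
accepting it. -/
def margin (p : K → I → Bool) (i : I) : ℤ := ∑ k, if p k i then -1 else 1

/-- The total margin of the issues accepted by `r`: the excess of the cumulative distance of `r`
to the profile `p` over that of the ballot rejecting everything. -/
def excess (p : K → I → Bool) (r : I → Bool) : ℤ := ∑ i, bif r i then margin p i else 0

theorem whamming_eq_sum (w : I → ℕ) (r r' : I → Bool) :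
    whamming w r r' = ∑ i, bif r i ^^ r' i then w i else 0 := by
  rw [whamming, Finset.sum_filter]
  refine Finset.sum_congr rfl fun i _ => ?_
  cases r i <;> cases r' i <;> rfl

theorem hamming_eq_whamming (r r' : I → Bool) : hamming r r' = whamming (fun _ => 1) r r' :=
  Finset.card_eq_sum_ones _

theorem sum_hamming_eq_add_excess (p : K → I → Bool) (r : I → Bool) :
    ∑ k, (hamming r (p k) : ℤ) = ∑ k, (hamming ⊥ (p k) : ℤ) + excess p r := by
  simp only [hamming_eq_whamming, whamming_eq_sum, excess, margin, Nat.cast_sum]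
  rw [Finset.sum_comm, Finset.sum_comm (s := (Finset.univ : Finset K)), ← Finset.sum_add_distrib]
  refine Finset.sum_congr rfl fun i _ => ?_
  cases r i
  · simp
  · rw [cond_true, ← Finset.sum_add_distrib]
    refine Finset.sum_congr rfl fun k _ => ?_
    cases p k i <;> simp

theorem excess_strictMono {p : K → I → Bool} (hp : ∀ i, 0 < margin p i) :
    StrictMono (excess p) := by
  have hle : ∀ i (v v' : Bool), v ≤ v' →
      (bif v then margin p i else 0) ≤ bif v' then margin p i else 0 := by
    simp [Bool.forall_bool, (hp _).le]
  refine Fintype.sum_strictMono.comp fun r r' h => ?_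
  obtain ⟨h, i, hi⟩ := Pi.lt_def.1 h
  obtain ⟨hr, hr'⟩ := Bool.lt_iff.1 hi
  exact Pi.lt_def.2 ⟨fun i => hle i _ _ (h i), i, by simp [hr, hr', hp i]⟩

theorem eq_of_ge_of_excess_le {p : K → I → Bool} (hp : ∀ i, 0 < margin p i) {r r' : I → Bool}
    (hle : r' ≤ r) (h : excess p r ≤ excess p r') : r = r' :=
  (eq_of_le_of_not_lt hle fun hlt => (excess_strictMono hp hlt).not_ge h).symm

end Margin

variable {K : Type*} [Fintype K] {n m : ℕ} {psi : (Fin n → Bool) → (Fin m → Bool) → Bool}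

theorem dist3_le_dist3_iff (p : Fin 3 → Issue n m → Bool) {r r' : Issue n m → Bool} :
    dist3 r (p 0) (p 1) (p 2) ≤ dist3 r' (p 0) (p 1) (p 2) ↔ excess p r ≤ excess p r' := by
  have h := sum_hamming_eq_add_excess p
  simp only [Fin.sum_univ_three] at h
  have hr := h r
  have hr' := h r'
  unfold dist3
  omega

theorem kemenyMem_iff_eq {p₁ p₂ p₃ r₀ : Issue n m → Bool} (h₀ : rational psi r₀)
    (h : ∀ r, rational psi r → dist3 r p₁ p₂ p₃ ≤ dist3 r₀ p₁ p₂ p₃ → r = r₀)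
    (r : Issue n m → Bool) : kemenyMem psi p₁ p₂ p₃ r ↔ r = r₀ := by
  refine ⟨fun hr => h r hr.1 (hr.2 r₀ h₀), ?_⟩
  rintro rfl
  refine ⟨h₀, fun r' hr' => ?_⟩
  by_contra! hlt
  exact hlt.ne (by rw [h r' hr' hlt.le])

theorem sum_issue {M : Type*} [AddCommMonoid M] (f : Issue n m → M) :
    ∑ i, f i = ∑ i, f (.x i) + ∑ i, f (.x' i) + ∑ i, f (.z i)
      + ∑ j, f (.y j) + ∑ j, f (.y' j) + ∑ j, f (.t j)
      + ∑ k, ∑ l, f (.u k l) + f .a + ∑ j, f (.b j) := by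
  -- `proxyTypeEquiv`, from `deriving Fintype`, identifies the issues with a nested sum of types.
  rw [← (Issue.proxyTypeEquiv n m).sum_comp]
  simp only [Fintype.sum_sum_type, Fintype.sum_sigma, Fintype.sum_unique, add_assoc]
  rfl

theorem sum_cond_add_sum_cond_not {ι M : Type*} [Fintype ι] [AddCommMonoid M] (v : ι → Bool)
    (f g : ι → M) :
    (∑ i, bif v i then f i else 0) + (∑ i, bif !v i then g i else 0)
      = ∑ i, bif v i then f i else g i := by
  rw [← Finset.sum_add_distrib]
  refine Finset.sum_congr rfl fun i _ => ?_
  cases v i <;> simp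

/-! ### Minimal rational ballots -/

/-- The ballot accepting exactly `a` and all `z`- and `t`-issues. -/
def ballotZT : Issue n m → Bool := fun i => match i with
  | .z _ => true
  | .t _ => true
  | .a => true
  | _ => false

/-- The ballot satisfying `A`, `B` and `a` that encodes the assignments `α` and `β` and rejects
everything else. -/
def ballotAB (α : Fin n → Bool) (β : Fin m → Bool) : Issue n m → Bool := fun i => match i with
  | .x i' => α i'
  | .x' i' => !(α i')
  | .y j => β j
  | .y' j => !(β j)
  | .a => true
  | _ => false

theorem rational_ballotZT (hn : 0 < n) (hm : 0 < m) :
    rational psi (ballotZT : Issue n m → Bool) := by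
  left
  have hA : ¬ bigA (ballotZT : Issue n m → Bool) := fun h => h ⟨0, hn⟩ rfl
  have hZ : bigZ (ballotZT : Issue n m → Bool) := fun _ => rfl
  have hB : ¬ bigB (ballotZT : Issue n m → Bool) := fun h => h ⟨0, hm⟩ rfl
  have hT : bigT (ballotZT : Issue n m → Bool) := fun _ => rfl
  have hC : ¬ bigC (ballotZT : Issue n m → Bool) := fun h => Bool.false_ne_true (h 0)
  refine ⟨?_, ?_, ?_, ?_, ?_, .inr ⟨hT, hB⟩, ?_, ?_, ?_, ?_, ?_, ?_⟩ <;>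
    simp [hA, hZ, hB, hT, hC, ballotZT]

theorem rational_Jalpha (hn : 0 < n) (hm : 0 < m) (α : Fin n → Bool) :
    rational psi (Jalpha α : Issue n m → Bool) := by
  left
  have hA : bigA (Jalpha α : Issue n m → Bool) := fun _ => (Bool.not_ne_self _).symm
  have hZ : ¬ bigZ (Jalpha α : Issue n m → Bool) := fun h => Bool.false_ne_true (h ⟨0, hn⟩)
  have hB : ¬ bigB (Jalpha α : Issue n m → Bool) := fun h => h ⟨0, hm⟩ rfl
  have hT : bigT (Jalpha α : Issue n m → Bool) := fun _ => rfl
  have hC : bigC (Jalpha α : Issue n m → Bool) := fun _ => rfl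
  refine ⟨?_, ?_, ?_, ?_, ?_, .inr ⟨hT, hB⟩, ?_, ?_, ?_, ?_, ?_, ?_⟩ <;>
    simp [hA, hZ, hB, hT, hC, Jalpha]

theorem ballotZT_le {r : Issue n m → Bool} (hZ : bigZ r) (hT : bigT r) (ha : r .a = true) :
    ballotZT ≤ r
  | .z i => (hZ i).ge
  | .t j => (hT j).ge
  | .a => ha.ge
  | .x _ | .x' _ | .y _ | .y' _ | .u _ _ | .b _ => Bool.false_le _

theorem ballotAB_le {r : Issue n m → Bool} (hA : bigA r) (hB : bigB r) (ha : r .a = true) :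
    ballotAB (fun i => r (.x i)) (fun j => r (.y j)) ≤ r
  | .x _ | .y _ => le_rfl
  | .x' i => (Bool.not_eq.2 (hA i)).le
  | .y' j => (Bool.not_eq.2 (hB j)).le
  | .a => ha.ge
  | .z _ | .t _ | .u _ _ | .b _ => Bool.false_le _

theorem Jalpha_le {r : Issue n m → Bool} (hA : bigA r) (hT : bigT r) (hC : bigC r) :
    Jalpha (fun i => r (.x i)) ≤ r
  | .x _ => le_rfl
  | .x' i => (Bool.not_eq.2 (hA i)).le
  | .t j => (hT j).ge
  | .b j => (hC j).ge
  | .z _ | .y _ | .y' _ | .u _ _ | .a => Bool.false_le _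

theorem Jp_le {r : Issue n m → Bool} {k : Fin 3} (h : ∀ l, r (.u k l) = true) : Jp k ≤ r
  | .u k' l => fun hk => by
    obtain rfl : k' = k := by simpa [Jp] using hk
    exact h l
  | .x _ | .x' _ | .z _ | .y _ | .y' _ | .t _ | .a | .b _ => Bool.false_le _

theorem exists_le_of_rational {r : Issue n m → Bool} (hr : rational psi r) :
    ballotZT ≤ r ∨ (∃ α β, psi α β = false ∧ ballotAB α β ≤ r) ∨ (∃ α, Jalpha α ≤ r) ∨
      ∃ k, Jp k ≤ r := by
  rcases hr with ⟨-, -, -, hAZ, -, hBT, -, -, -, hZ, hAB, hAT⟩ | ⟨k, hk⟩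
  · rcases hAZ with hA | hZ'
    · rcases hBT with ⟨hB, -⟩ | ⟨hT, -⟩
      · obtain ⟨hpsi, ha⟩ := hAB ⟨hA, hB⟩
        exact .inr (.inl ⟨_, _, hpsi, ballotAB_le hA hB ha⟩)
      · exact .inr (.inr (.inl ⟨_, Jalpha_le hA hT (hAT ⟨hA, hT⟩)⟩))
    · obtain ⟨ha, hT⟩ := hZ hZ'
      exact .inl (ballotZT_le hZ' hT ha)
  · exact .inr (.inr (.inr ⟨k, Jp_le hk⟩))

theorem excess_ballotZT (p : K → Issue n m → Bool) :
    excess p ballotZT = ∑ i, margin p (.z i) + ∑ j, margin p (.t j) + margin p .a := by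
  simp [excess, sum_issue, ballotZT]

theorem excess_ballotAB (p : K → Issue n m → Bool) (α : Fin n → Bool) (β : Fin m → Bool) :
    excess p (ballotAB α β) = ∑ i, (bif α i then margin p (.x i) else margin p (.x' i))
      + ∑ j, (bif β j then margin p (.y j) else margin p (.y' j)) + margin p .a := by
  rw [← sum_cond_add_sum_cond_not α, ← sum_cond_add_sum_cond_not β]
  simp [excess, sum_issue, ballotAB, add_assoc]

theorem excess_Jalpha (p : K → Issue n m → Bool) (α : Fin n → Bool) :
    excess p (Jalpha α) = ∑ i, (bif α i then margin p (.x i) else margin p (.x' i))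
      + ∑ j, margin p (.t j) + ∑ j, margin p (.b j) := by
  rw [← sum_cond_add_sum_cond_not]
  simp [excess, sum_issue, Jalpha]

theorem le_excess_Jp {p : K → Issue n m → Bool} (hp : ∀ i, 0 < margin p i) (k : Fin 3) :
    10 * n + 10 * m + 10 ≤ excess p (Jp k) := by
  calc (10 * n + 10 * m + 10 : ℤ)
    _ = ∑ _l : Fin (10 * n + 10 * m + 10), 1 := by simp
    _ ≤ ∑ l, margin p (.u k l) := Finset.sum_le_sum fun l _ => hp (.u k l)
    _ = excess p (Jp k) := by
      fin_cases k <;> simp [excess, sum_issue, Fin.sum_univ_three, Jp]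

/-! ### The original profile -/

theorem margin_Jp (i : Issue n m) :
    margin Jp i = match i with
      | .u _ _ => 1
      | _ => 3 := by
  cases i with
  | u k l => fin_cases k <;> rfl
  | _ => rfl

theorem margin_Jp_pos (i : Issue n m) : 0 < margin Jp i := by
  rw [margin_Jp]
  split <;> norm_num

theorem excess_Jp_ballotZT : excess Jp (ballotZT : Issue n m → Bool) = 3 * n + 3 * m + 3 := by
  simp [excess_ballotZT, margin_Jp, mul_comm]

theorem excess_Jp_ballotAB (α : Fin n → Bool) (β : Fin m → Bool) :
    excess Jp (ballotAB α β) = 3 * n + 3 * m + 3 := by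
  simp [excess_ballotAB, margin_Jp, mul_comm]

theorem excess_Jp_Jalpha (α : Fin n → Bool) :
    excess Jp (Jalpha α : Issue n m → Bool) = 3 * n + 3 * m + 3 * (2 * m + 4) := by
  simp [excess_Jalpha, margin_Jp, mul_comm]

theorem eq_ballotZT_or_ballotAB_of_kemenyMem_Jp (hn : 0 < n) (hm : 0 < m) {r : Issue n m → Bool}
    (hr : kemenyMem psi (Jp 0) (Jp 1) (Jp 2) r) :
    r = ballotZT ∨ ∃ α β, psi α β = false ∧ r = ballotAB α β := by
  have hr_le : excess Jp r ≤ 3 * n + 3 * m + 3 := by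
    rw [← excess_Jp_ballotZT, ← dist3_le_dist3_iff]
    exact hr.2 _ (rational_ballotZT hn hm)
  have hmono := (excess_strictMono (margin_Jp_pos (n := n) (m := m))).monotone
  rcases exists_le_of_rational hr.1 with hle | ⟨α, β, hpsi, hle⟩ | ⟨α, hle⟩ | ⟨k, hle⟩
  · exact .inl (eq_of_ge_of_excess_le margin_Jp_pos hle (by rwa [excess_Jp_ballotZT]))
  · exact .inr ⟨α, β, hpsi,
      eq_of_ge_of_excess_le margin_Jp_pos hle (by rwa [excess_Jp_ballotAB])⟩
  · have hcost := hmono hle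
    rw [excess_Jp_Jalpha] at hcost
    omega
  · have hrow := le_excess_Jp (margin_Jp_pos (n := n) (m := m)) k
    have hcost := hmono hle
    omega

/-! ### The bribed profile -/

/-- The profile `(J*_α, J₂, J₃)`. -/
def bribed (α : Fin n → Bool) : Fin 3 → Issue n m → Bool := ![Jalpha α, Jp 1, Jp 2]

theorem margin_bribed (α : Fin n → Bool) (i : Issue n m) :
    margin (bribed α) i = match i with
      | .x i' => if α i' then 1 else 3
      | .x' i' => if α i' then 3 else 1
      | .t _ | .b _ => 1
      | .u k _ => if k = 0 then 3 else 1
      | _ => 3 := by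
  cases i with
  | u k l => fin_cases k <;> rfl
  | x i => cases h : α i <;> simp [margin, bribed, Fin.sum_univ_three, Jalpha, Jp, h]
  | x' i => cases h : α i <;> simp [margin, bribed, Fin.sum_univ_three, Jalpha, Jp, h]
  | _ => rfl

theorem margin_bribed_pos (α : Fin n → Bool) (i : Issue n m) : 0 < margin (bribed α) i := by
  rw [margin_bribed]
  split <;> (try split) <;> norm_num

theorem excess_bribed_ballotZT (α : Fin n → Bool) :
    excess (bribed α) (ballotZT : Issue n m → Bool) = 3 * n + m + 3 := by
  simp [excess_ballotZT, margin_bribed, mul_comm]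

theorem sum_cond_margin_bribed (α α' : Fin n → Bool) :
    ∑ i, (bif α' i then margin (bribed α) (.x i : Issue n m)
      else margin (bribed α) (.x' i : Issue n m))
      = n + 2 * hammingDist α' α := by
  have h : ∀ i, (bif α' i then margin (bribed α) (.x i : Issue n m)
      else margin (bribed α) (.x' i : Issue n m))
      = 1 + 2 * if α' i ≠ α i then 1 else 0 := fun i => by
    cases hα : α i <;> cases hα' : α' i <;> simp [margin_bribed, hα]
  rw [Fintype.sum_congr _ _ h, Finset.sum_add_distrib, ← Finset.mul_sum, hammingDist,
    Finset.natCast_card_filter]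
  simp

theorem excess_bribed_ballotAB (α α' : Fin n → Bool) (β : Fin m → Bool) :
    excess (bribed α) (ballotAB α' β) = n + 2 * hammingDist α' α + 3 * m + 3 := by
  rw [excess_ballotAB, sum_cond_margin_bribed]
  simp [margin_bribed, mul_comm]

theorem excess_bribed_Jalpha (α α' : Fin n → Bool) :
    excess (bribed α) (Jalpha α' : Issue n m → Bool)
      = n + 2 * hammingDist α' α + m + (2 * m + 4) := by
  rw [excess_Jalpha, sum_cond_margin_bribed]
  simp [margin_bribed]

theorem eq_Jalpha_of_dist3_le (hmn : m < n) {α : Fin n → Bool} (hα : ∀ β, psi α β = true)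
    {r : Issue n m → Bool} (hr : rational psi r)
    (hd : dist3 r (Jalpha α) (Jp 1) (Jp 2)
      ≤ dist3 (Jalpha α : Issue n m → Bool) (Jalpha α) (Jp 1) (Jp 2)) :
    r = Jalpha α := by
  have hJ := excess_bribed_Jalpha (m := m) α α
  rw [hammingDist_self] at hJ
  replace hd := (dist3_le_dist3_iff (bribed α)).1 hd
  have hmono := (excess_strictMono (margin_bribed_pos (m := m) α)).monotone
  rcases exists_le_of_rational hr with hle | ⟨α', β, hpsi, hle⟩ | ⟨α', hle⟩ | ⟨k, hle⟩
  · have hcost := hmono hle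
    rw [excess_bribed_ballotZT] at hcost
    omega
  · have hne : α' ≠ α := by
      rintro rfl
      simp [hα] at hpsi
    have hdist := hammingDist_pos.2 hne
    have hcost := hmono hle
    rw [excess_bribed_ballotAB] at hcost
    omega
  · have hcost := hmono hle
    rw [excess_bribed_Jalpha] at hcost
    obtain rfl : α' = α := hammingDist_eq_zero.1 (by omega)
    exact eq_of_ge_of_excess_le (margin_bribed_pos α') hle hd
  · have hrow := le_excess_Jp (margin_bribed_pos (m := m) α) k
    have hcost := hmono hle
    omega

/-! ### Distance to the desired ballot -/

theorem whamming_wt_Jzero (r : Issue n m → Bool) :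
    whamming wt r Jzero = (Finset.univ.filter fun j => r (.b j) = false).card := by
  rw [whamming_eq_sum, sum_issue, Finset.card_filter]
  simp [wt, Jzero, Bool.cond_eq_ite]

theorem whamming_wt_Jalpha (α : Fin n → Bool) :
    whamming wt (Jalpha α : Issue n m → Bool) Jzero = 0 := by
  rw [whamming_wt_Jzero]
  simp [Jalpha]

theorem whamming_wt_of_kemenyMem_Jp (hn : 0 < n) (hm : 0 < m) {r : Issue n m → Bool}
    (hr : kemenyMem psi (Jp 0) (Jp 1) (Jp 2) r) : whamming wt r Jzero = 2 * m + 4 := by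
  rw [whamming_wt_Jzero]
  rcases eq_ballotZT_or_ballotAB_of_kemenyMem_Jp hn hm hr with rfl | ⟨α, β, -, rfl⟩
  · simp [ballotZT]
  · simp [ballotAB]

end Brib

open Brib in
/-- assume m < n. If α is such that ψ[α∪β] is true for every β, then
Kemeny((J*_α, J₂, J₃)) = {J*_α}; moreover d(J*_α, J₀, w) = 0, which is strictly
smaller than the weighted distance 2m+4 of every Kemeny outcome of J⃗ to J₀. -/
theorem brib_successful_bribe (n m : ℕ) (hn : 0 < n) (hm : 0 < m) (hmn : m < n)
    (psi : (Fin n → Bool) → (Fin m → Bool) → Bool)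
    (α : Fin n → Bool) (hα : ∀ β : Fin m → Bool, psi α β = true) :
    (∀ r : Issue n m → Bool,
      kemenyMem psi (Jalpha α) (Jp 1) (Jp 2) r ↔ r = Jalpha α) ∧
    whamming wt (Jalpha α : Issue n m → Bool) Jzero = 0 ∧
    (∀ r : Issue n m → Bool, kemenyMem psi (Jp 0) (Jp 1) (Jp 2) r →
      whamming wt r Jzero = 2 * m + 4 ∧
      whamming wt (Jalpha α : Issue n m → Bool) Jzero < whamming wt r Jzero) := by
  have h₀ := whamming_wt_Jalpha (m := m) α
  refine ⟨kemenyMem_iff_eq (rational_Jalpha hn hm α) fun r => eq_Jalpha_of_dist3_le hmn hα, h₀,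
    fun r hr => ?_⟩
  have hw := whamming_wt_of_kemenyMem_Jp hn hm hr
  exact ⟨hw, by omega⟩
end
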